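/- Let M be a left R-module. Then there exists a left R-module N containing M as a direct summand and a short exact sequence 0 → N → X → N → 0 where X = (⊕_{i∈ℕ} Pᵢ) ⊕ (∏_{i∈ℕ} Iᵢ) with all Pᵢ projective and all Iᵢ injective. Explicitly, given a projective resolution ⋯ → P₁ → P₀ → M → 0 with images Lᵢ and an injective coresolution 0 → M → I₀ → I₁ → ⋯ with kernels Kᵢ, one may take N = M ⊕ (⊕_{i∈ℕ} L_{i+1}) ⊕ (∏_{i∈ℕ} K_{i+1}). -/

import Mathlib

open CategoryTheory CategoryTheory.Limits

set_option autoImplicit false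

universe u

variable {R : Type u} [Ring R]

/-- A short exact sequence of `R`-modules encoded by two linear maps. -/
def IsSES {A B C : ModuleCat.{u} R} (f : A →ₗ[R] B) (g : B →ₗ[R] C) : Prop :=
  Function.Injective f ∧ Function.Exact f g ∧ Function.Surjective g

open DirectSum

/-- The syzygies of the canonical free resolution of `M`. -/
noncomputable def syz (M : ModuleCat.{u} R) : ℕ → ModuleCat.{u} R
  | 0 => M
  | n + 1 => ModuleCat.of R
      (LinearMap.ker (Finsupp.linearCombination R (id : (syz M n) → (syz M n))))

/-- The cosyzygies of an injective coresolution of `M`. -/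
noncomputable def cosyz (M : ModuleCat.{u} R) : ℕ → ModuleCat.{u} R
  | 0 => M
  | n + 1 => ModuleCat.of R
      ((Injective.under (cosyz M n) : ModuleCat.{u} R) ⧸ LinearMap.range (Injective.ι (cosyz M n)).hom)

/-- The shift dropping the zeroth component of a direct sum. -/
noncomputable def shiftMap (L : ℕ → ModuleCat.{u} R) :
    (⨁ i, L i) →ₗ[R] (⨁ i, L (i + 1)) where
  toFun x := DFinsupp.comapDomain (fun i : ℕ => i + 1) (add_left_injective 1) x
  map_add' x y := DFinsupp.comapDomain_add _ _ x y
  map_smul' r x := DFinsupp.comapDomain_smul _ _ r x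

theorem shiftMap_apply (L : ℕ → ModuleCat.{u} R) (x : ⨁ i, L i) (i : ℕ) :
    (shiftMap L x) i = x (i + 1) := 
  DFinsupp.comapDomain_apply (fun i : ℕ => i + 1) (add_left_injective 1) x i

/-- Componentwise lifting along maps of direct sums. -/
theorem exists_lift {A B : ℕ → ModuleCat.{u} R} (φ : ∀ i, A i →ₗ[R] B i) (y : ⨁ i, B i)
    (h : ∀ i, ∃ a, φ i a = y i) : ∃ x : ⨁ i, A i, ∀ i, φ i (x i) = y i := by
  classical
  choose a ha using h
  refine ⟨DFinsupp.mk (DFinsupp.support y) (fun i => a i), fun i => ?_⟩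
  by_cases hi : i ∈ DFinsupp.support y
  · exact (congrArg (φ i) (DFinsupp.mk_of_mem hi)).trans (ha i)
  · refine (congrArg (φ i) (DFinsupp.mk_of_notMem (β := fun i => A i) hi)).trans ?_
    rw [map_zero]
    exact (DFinsupp.notMem_support_iff.mp hi).symm

/-- The left map. -/
noncomputable def leftMap {L P I K : ℕ → ModuleCat.{u} R}
    (ι : ∀ i, L (i + 1) →ₗ[R] P i) (a : ∀ i, K i →ₗ[R] I i) :
    ((⨁ i, L (i + 1)) × ∀ i, K i) →ₗ[R] ((⨁ i, P i) × ∀ i, I i) :=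
  LinearMap.prodMap (DFinsupp.mapRange.linearMap ι)
    (LinearMap.pi fun i => (a i).comp (LinearMap.proj i))

/-- The components of the right map in the product. -/
noncomputable def rightComp {P I K : ℕ → ModuleCat.{u} R}
    (e : P 0 →ₗ[R] K 0) (b : ∀ i, I i →ₗ[R] K (i + 1)) :
    ∀ i, ((⨁ i, P i) × ∀ i, I i) →ₗ[R] K i
  | 0 => (e.comp (DirectSum.component R ℕ (fun i => P i) 0)).comp (LinearMap.fst R _ _)
  | i + 1 => ((b i).comp (LinearMap.proj i)).comp (LinearMap.snd R _ _)

/-- The right map. -/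
noncomputable def rightMap {L P I K : ℕ → ModuleCat.{u} R}
    (π : ∀ i, P i →ₗ[R] L i) (e : P 0 →ₗ[R] K 0) (b : ∀ i, I i →ₗ[R] K (i + 1)) :
    ((⨁ i, P i) × ∀ i, I i) →ₗ[R] ((⨁ i, L (i + 1)) × ∀ i, K i) :=
  LinearMap.prod
    (((shiftMap L).comp (DFinsupp.mapRange.linearMap π)).comp (LinearMap.fst R _ _))
    (LinearMap.pi (rightComp e b))

section
variable {L P I K : ℕ → ModuleCat.{u} R}
    (ι : ∀ i, L (i + 1) →ₗ[R] P i) (a : ∀ i, K i →ₗ[R] I i)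
    (π : ∀ i, P i →ₗ[R] L i) (e : P 0 →ₗ[R] K 0) (b : ∀ i, I i →ₗ[R] K (i + 1))

theorem leftMap_fst (x) (i : ℕ) : (leftMap ι a x).1 i = ι i (x.1 i) := rfl
theorem leftMap_snd (x) (i : ℕ) : (leftMap ι a x).2 i = a i (x.2 i) := rfl
theorem rightMap_fst (x) (i : ℕ) : (rightMap π e b x).1 i = π (i + 1) (x.1 (i + 1)) :=
  (shiftMap_apply L _ i).trans rfl
theorem rightMap_zero (x) : (rightMap π e b x).2 0 = e (x.1 0) := rfl
theorem rightMap_succ (x) (i : ℕ) : (rightMap π e b x).2 (i + 1) = b i (x.2 i) := rfl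

theorem left_injective (hι : ∀ i, Function.Injective (ι i))
    (ha : ∀ i, Function.Injective (a i)) : Function.Injective (leftMap ι a) := by
  intro x y h
  refine Prod.ext (DFinsupp.ext fun i => hι i ?_) (funext fun i => ha i ?_)
  · exact congrArg (fun z => z.1 i) h
  · exact congrArg (fun z => z.2 i) h

theorem right_surjective (hπ : ∀ i, Function.Surjective (π i)) (he : Function.Surjective e)
    (hb : ∀ i, Function.Surjective (b i)) : Function.Surjective (rightMap π e b) := by
  classical
  intro y
  obtain ⟨q, hq⟩ := he (y.2 0)
  obtain ⟨p, hp⟩ := exists_lift (fun i => π (i + 1)) y.1 (fun i => hπ (i + 1) _)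
  choose x hx using fun i => hb i (y.2 (i + 1))
  -- assemble an element of the direct sum from its head and its tail
  obtain ⟨p', h0, hs⟩ : ∃ p' : ⨁ i, P i, p' 0 = q ∧ ∀ i, p' (i + 1) = p i := by
    let v : ∀ i, P i := fun i => match i with
      | 0 => q
      | i + 1 => p i
    refine ⟨DFinsupp.mk (insert 0 ((DFinsupp.support p).image (· + 1))) (fun i => v i), ?_, ?_⟩
    · exact DFinsupp.mk_of_mem (Finset.mem_insert_self _ _)
    · intro i
      by_cases hi : i ∈ DFinsupp.support p
      · exact DFinsupp.mk_of_mem (Finset.mem_insert_of_mem (Finset.mem_image_of_mem _ hi))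
      · refine (DFinsupp.mk_of_notMem ?_).trans (DFinsupp.notMem_support_iff.mp hi).symm
        simpa using hi
  refine ⟨(p', x), Prod.ext (DFinsupp.ext fun i => ?_) (funext fun i => ?_)⟩
  · refine (rightMap_fst π e b _ i).trans ?_
    exact (congrArg (π (i + 1)) (hs i)).trans (hp i)
  · cases i with
    | zero => exact (congrArg e h0).trans hq
    | succ i => exact hx i

theorem left_right_exact (h : ∀ i, Function.Exact (ι i) (π i))
    (he : ∀ p, e p = 0 ↔ π 0 p = 0) (hab : ∀ i, Function.Exact (a i) (b i)) :
    Function.Exact (leftMap ι a) (rightMap π e b) := by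
  intro y
  constructor
  · intro hy
    have h1 : ∀ i, π i (y.1 i) = 0 := by
      intro i
      cases i with
      | zero =>
        refine (he _).mp ?_
        exact congrArg (fun z => z.2 0) hy
      | succ i =>
        refine (rightMap_fst π e b y i).symm.trans ?_
        exact congrArg (fun z => z.1 i) hy
    have h2 : ∀ i, b i (y.2 i) = 0 := fun i => congrArg (fun z => z.2 (i + 1)) hy
    obtain ⟨l, hl⟩ := exists_lift (A := fun i => L (i + 1)) ι y.1 (fun i => (h i _).mp (h1 i))
    choose k hk using fun i => (hab i _).mp (h2 i)
    exact ⟨(l, k), Prod.ext (DFinsupp.ext hl) (funext hk)⟩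
  · rintro ⟨x, rfl⟩
    refine Prod.ext (DFinsupp.ext fun i => ?_) (funext fun i => ?_)
    · exact (rightMap_fst π e b _ i).trans ((h (i + 1)).apply_apply_eq_zero _)
    · cases i with
      | zero => exact (he _).mpr ((h 0).apply_apply_eq_zero _)
      | succ i => exact (hab i).apply_apply_eq_zero _
end

/-- Every module `M` is a direct summand of a module `N` that fits in a
short exact sequence `0 → N → (⊕ᵢ Pᵢ) ⊕ (∏ᵢ Iᵢ) → N → 0` with the `Pᵢ` projective and the
`Iᵢ` injective. -/
theorem statement19 (M : ModuleCat.{u} R) :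
    ∃ (N : ModuleCat.{u} R) (s : M →ₗ[R] N) (p : N →ₗ[R] M),
      p ∘ₗ s = LinearMap.id ∧
      ∃ (P I : ℕ → ModuleCat.{u} R)
        (f : N →ₗ[R] ((⨁ i, P i) × ∀ i, I i))
        (g : (ModuleCat.of R ((⨁ i, P i) × ∀ i, I i)) →ₗ[R] N),
        (∀ i, Module.Projective R (P i)) ∧ (∀ i, Module.Injective R (I i)) ∧
        IsSES (B := ModuleCat.of R ((⨁ i, P i) × ∀ i, I i)) f g := by
  let L := syz M
  let K := cosyz M
  let P : ℕ → ModuleCat.{u} R := fun i => ModuleCat.of R (L i →₀ R)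
  let I : ℕ → ModuleCat.{u} R := fun i => Injective.under (K i)
  let π : ∀ i, P i →ₗ[R] L i := fun i => Finsupp.linearCombination R (id : L i → L i)
  let ι : ∀ i, L (i + 1) →ₗ[R] P i := fun i => (LinearMap.ker (π i)).subtype
  let a : ∀ i, K i →ₗ[R] I i := fun i => (Injective.ι (K i)).hom
  let b : ∀ i, I i →ₗ[R] K (i + 1) := fun i => (LinearMap.range (a i)).mkQ
  let e : P 0 →ₗ[R] K 0 := π 0
  have hπ : ∀ i, Function.Surjective (π i) := fun i =>
    Finsupp.linearCombination_id_surjective R (L i)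
  have ha : ∀ i, Function.Injective (a i) := fun i =>
    (ModuleCat.mono_iff_injective (Injective.ι (K i))).mp inferInstance
  have hb : ∀ i, Function.Surjective (b i) := fun i => Submodule.mkQ_surjective _
  refine ⟨ModuleCat.of R ((⨁ i, L (i + 1)) × ∀ i, K i),
    (LinearMap.inr R (⨁ i, L (i + 1)) (∀ i, K i)).comp
      (LinearMap.single R (fun i => K i) 0),
    (LinearMap.proj (R := R) (φ := fun i => K i) 0).comp
      (LinearMap.snd R (⨁ i, L (i + 1)) (∀ i, K i)), ?_, P, I, leftMap ι a, rightMap π e b,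
    ?_, ?_, ?_, ?_, ?_⟩
  · refine LinearMap.ext fun m => ?_
    exact Pi.single_eq_same (M := fun i => K i) 0 m
  · intro i
    exact inferInstanceAs (Module.Projective R (L i →₀ R))
  · intro i
    have : Injective (I i) := inferInstanceAs (Injective (Injective.under (K i)))
    exact Module.injective_module_of_injective_object R (I i)
  · exact left_injective ι a (fun i => Subtype.val_injective) ha
  · exact left_right_exact ι a π e b (fun i => LinearMap.exact_subtype_ker_map (π i))
      (fun p => Iff.rfl) (fun i => LinearMap.exact_map_mkQ_range (a i))
  · exact right_surjective π e b hπ (hπ 0) hb
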